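/- Variational characterization of the Euler–top equations: let I be a symmetric 3×3 real matrix, e ∈ ℝ³, and let γ, ω : [t₀,t₁] → ℝ³ (t₀ < t₁) be C¹ curves satisfying the advection equation γ'(t) = γ(t) × ω(t) on [t₀,t₁]. Then the following are equivalent: (a) for every C¹ map σ : [t₀,t₁] → ℝ³ with σ(t₀) = 0 and σ(t₁) = 0 one has ∫_{t₀}^{t₁} [ (I ω(t)) · ( σ'(t) + ω(t) × σ(t) ) − e · ( γ(t) × σ(t) ) ] dt = 0; (b) I ω'(t) + ω(t) × (I ω(t)) = γ(t) × e for all t ∈ [t₀,t₁]. (Condition (a) states that the first variation of the action of the heavy top Lagrangian L(γ,ω) = ½ ω · Iω − γ · e vanishes for all admissible variations δγ = γ × σ, δω = σ' + ω × σ with σ vanishing at the endpoints.) -/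

import Mathlib

open Matrix Set

/-!
Write `m = I ω`. Cyclicity of the triple product turns the integrand of the first variation into
`m ⬝ σ' + (m × ω - e × γ) ⬝ σ`. Integrating `m ⬝ σ'` by parts, the boundary terms vanish and the
first variation becomes `∫ (m × ω - e × γ - m') ⬝ σ`, which vanishes for all `σ` exactly when
`m' = m × ω - e × γ`, by the fundamental lemma of the calculus of variations.
-/

section CrossProduct

variable {R : Type*} [CommRing R]

lemma dotProduct_add_cross_sub_dotProduct_cross (m ω e γ σ σ' : Fin 3 → R) :
    m ⬝ᵥ (σ' + ω ⨯₃ σ) - e ⬝ᵥ γ ⨯₃ σ = m ⬝ᵥ σ' + (m ⨯₃ ω - e ⨯₃ γ) ⬝ᵥ σ := by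
  have cross_dotProduct (u v w : Fin 3 → R) : u ⨯₃ v ⬝ᵥ w = u ⬝ᵥ v ⨯₃ w := by
    rw [dotProduct_comm, triple_product_permutation]
  rw [dotProduct_add, sub_dotProduct, cross_dotProduct, cross_dotProduct, add_sub_assoc]

lemma eq_cross_sub_cross_iff (m m' ω e γ : Fin 3 → R) :
    m' = m ⨯₃ ω - e ⨯₃ γ ↔ m' + ω ⨯₃ m = γ ⨯₃ e := by
  rw [← cross_anticomm m ω, ← cross_anticomm e γ, ← sub_eq_add_neg, sub_eq_iff_eq_add',
    sub_eq_add_neg]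

lemma continuousOn_cross [TopologicalSpace R] [IsTopologicalRing R] {X : Type*}
    [TopologicalSpace X] {f g : X → Fin 3 → R} {s : Set X}
    (hf : ContinuousOn f s) (hg : ContinuousOn g s) : ContinuousOn (fun x => f x ⨯₃ g x) s := by
  have cross_continuous : Continuous fun p : (Fin 3 → R) × (Fin 3 → R) => p.1 ⨯₃ p.2 := by
    simp only [cross_apply]
    fun_prop
  exact cross_continuous.comp_continuousOn (hf.prodMk hg)

end CrossProduct

section CalculusOfVariations

open MeasureTheory
open scoped Interval ContDiff

variable {a b : ℝ}

lemma eqOn_zero_of_integral_contDiff_smul_eq_zero {E : Type*} [NormedAddCommGroup E]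
    [NormedSpace ℝ E] [CompleteSpace E] {f : ℝ → E} (hab : a < b) (hf : ContinuousOn f (Icc a b))
    (h : ∀ g : ℝ → ℝ, ContDiff ℝ ∞ g → tsupport g ⊆ Ioo a b → ∫ t in a..b, g t • f t = 0) :
    EqOn f 0 (Icc a b) := by
  have hf_ae : ∀ᵐ t, t ∈ Ioo a b → f t = 0 := by
    refine isOpen_Ioo.ae_eq_zero_of_integral_contDiff_smul_eq_zero
      ((hf.mono Ioo_subset_Icc_self).locallyIntegrableOn measurableSet_Ioo)
      fun g hg _ hsupp => ?_
    rw [← h g hg hsupp, intervalIntegral.integral_of_le hab.le,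
      setIntegral_eq_integral_of_forall_compl_eq_zero]
    intro t ht
    rw [image_eq_zero_of_notMem_tsupport fun htg => ht (Ioo_subset_Ioc_self (hsupp htg)),
      zero_smul]
  refine Measure.eqOn_Icc_of_ae_eq volume hab.ne ?_ hf continuousOn_const
  rw [← restrict_Ioo_eq_restrict_Icc]
  exact (ae_restrict_iff' measurableSet_Ioo).2 hf_ae

variable {ι : Type*} [Fintype ι]

lemma eqOn_zero_iff_integral_dotProduct_eq_zero {f : ℝ → ι → ℝ} (hab : a < b)
    (hf : ContinuousOn f (Icc a b)) :
    EqOn f 0 (Icc a b) ↔ ∀ σ : ℝ → ι → ℝ, ContDiff ℝ 1 σ → σ a = 0 → σ b = 0 →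
      ∫ t in a..b, f t ⬝ᵥ σ t = 0 := by
  constructor
  · intro hf₀ σ _ _ _
    refine intervalIntegral.integral_zero_ae (.of_forall fun t ht => ?_)
    rw [uIoc_of_le hab.le] at ht
    rw [hf₀ (Ioc_subset_Icc_self ht), Pi.zero_apply, zero_dotProduct]
  · classical
    intro h t ht
    ext i
    refine eqOn_zero_of_integral_contDiff_smul_eq_zero hab (continuousOn_pi.1 hf i)
      (fun g hg hsupp => ?_) ht
    have hg_zero {s : ℝ} (hs : s ∉ Ioo a b) : g s = 0 :=
      image_eq_zero_of_notMem_tsupport fun hsg => hs (hsupp hsg)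
    have h_single := h (fun s => g s • Pi.single i 1) ((hg.of_le (by simp)).smul contDiff_const)
      (by simp [hg_zero]) (by simp [hg_zero])
    simpa only [dotProduct_smul, dotProduct_single_one] using h_single

lemma integral_deriv_dotProduct_eq_sub {u v u' v' : ℝ → ι → ℝ}
    (hu : ∀ t ∈ [[a, b]], HasDerivWithinAt u (u' t) [[a, b]] t)
    (hv : ∀ t ∈ [[a, b]], HasDerivWithinAt v (v' t) [[a, b]] t)
    (hu' : ContinuousOn u' [[a, b]]) (hv' : ContinuousOn v' [[a, b]]) :
    ∫ t in a..b, u' t ⬝ᵥ v t + u t ⬝ᵥ v' t = u b ⬝ᵥ v b - u a ⬝ᵥ v a := by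
  have hu_i (i : ι) : ∀ t ∈ [[a, b]], HasDerivWithinAt (u · i) (u' t i) [[a, b]] t :=
    fun t ht => hasDerivWithinAt_pi.1 (hu t ht) i
  have hv_i (i : ι) : ∀ t ∈ [[a, b]], HasDerivWithinAt (v · i) (v' t i) [[a, b]] t :=
    fun t ht => hasDerivWithinAt_pi.1 (hv t ht) i
  have hu'_i (i : ι) : ContinuousOn (u' · i) [[a, b]] := continuousOn_pi.1 hu' i
  have hv'_i (i : ι) : ContinuousOn (v' · i) [[a, b]] := continuousOn_pi.1 hv' i
  have h_int (i : ι) :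
      IntervalIntegrable (fun t => u' t i * v t i + u t i * v' t i) volume a b :=
    (((hu'_i i).mul (HasDerivWithinAt.continuousOn (hv_i i))).add
      ((HasDerivWithinAt.continuousOn (hu_i i)).mul (hv'_i i))).intervalIntegrable
  simp only [dotProduct, ← Finset.sum_add_distrib, ← Finset.sum_sub_distrib]
  rw [intervalIntegral.integral_finsetSum fun i _ => h_int i]
  exact Finset.sum_congr rfl fun i _ =>
    intervalIntegral.integral_deriv_mul_eq_sub_of_hasDerivWithinAt (hu_i i) (hv_i i)
      (hu'_i i).intervalIntegrable (hv'_i i).intervalIntegrable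

lemma integral_dotProduct_deriv_add {p p' q σ : ℝ → ι → ℝ}
    (hp : ∀ t ∈ [[a, b]], HasDerivWithinAt p (p' t) [[a, b]] t)
    (hp' : ContinuousOn p' [[a, b]]) (hq : ContinuousOn q [[a, b]])
    (hσ : ContDiff ℝ 1 σ) (hσa : σ a = 0) (hσb : σ b = 0) :
    ∫ t in a..b, (p t ⬝ᵥ deriv σ t + q t ⬝ᵥ σ t) = ∫ t in a..b, (q - p') t ⬝ᵥ σ t := by
  have hσ' : ContinuousOn (deriv σ) [[a, b]] := (hσ.continuous_deriv le_rfl).continuousOn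
  have hdot {f g : ℝ → ι → ℝ} (hf : ContinuousOn f [[a, b]]) (hg : ContinuousOn g [[a, b]]) :
      ContinuousOn (fun t => f t ⬝ᵥ g t) [[a, b]] := by
    simp only [dotProduct]
    fun_prop
  have hparts : ∫ t in a..b, p' t ⬝ᵥ σ t + p t ⬝ᵥ deriv σ t = 0 := by
    rw [integral_deriv_dotProduct_eq_sub hp
      (fun t _ => (hσ.differentiable one_ne_zero t).hasDerivAt.hasDerivWithinAt) hp' hσ',
      hσa, hσb, dotProduct_zero, dotProduct_zero, sub_zero]
  rw [← sub_eq_zero, ← hparts, ← intervalIntegral.integral_sub]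
  · refine intervalIntegral.integral_congr fun t _ => ?_
    simp only [Pi.sub_apply, sub_dotProduct]
    ring
  · exact ((hdot (HasDerivWithinAt.continuousOn hp) hσ').add
      (hdot hq hσ.continuous.continuousOn)).intervalIntegrable
  · exact (hdot (hq.sub hp') hσ.continuous.continuousOn).intervalIntegrable

lemma forall_integral_dotProduct_deriv_add_eq_zero_iff {p p' q : ℝ → ι → ℝ} (hab : a < b)
    (hp : ∀ t ∈ Icc a b, HasDerivWithinAt p (p' t) (Icc a b) t)
    (hp' : ContinuousOn p' (Icc a b)) (hq : ContinuousOn q (Icc a b)) :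
    (∀ σ : ℝ → ι → ℝ, ContDiff ℝ 1 σ → σ a = 0 → σ b = 0 →
      ∫ t in a..b, (p t ⬝ᵥ deriv σ t + q t ⬝ᵥ σ t) = 0) ↔ EqOn p' q (Icc a b) := by
  have hres : EqOn p' q (Icc a b) ↔ EqOn (q - p') 0 (Icc a b) :=
    forall₂_congr fun t _ => by rw [Pi.sub_apply, Pi.zero_apply, sub_eq_zero, eq_comm]
  rw [hres, eqOn_zero_iff_integral_dotProduct_eq_zero hab (hq.sub hp')]
  rw [← uIcc_of_le hab.le] at hp hp' hq
  refine forall₄_congr fun σ hσ hσa hσb => ?_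
  rw [integral_dotProduct_deriv_add hp hp' hq hσ hσa hσb]

end CalculusOfVariations

/-- For a Lagrangian `L(γ, ω)`, take `m = ∂L/∂ω` and `e = -∂L/∂γ` along the curve `(γ, ω)`; the
heavy top has `m = I ω` and constant `e`. -/
theorem euler_top_variational_characterization_general
    {t₀ t₁ : ℝ} (ht : t₀ < t₁) {m m' γ ω e : ℝ → Fin 3 → ℝ}
    (hm : ∀ t ∈ Icc t₀ t₁, HasDerivWithinAt m (m' t) (Icc t₀ t₁) t)
    (hm' : ContinuousOn m' (Icc t₀ t₁)) (hγ : ContinuousOn γ (Icc t₀ t₁))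
    (hω : ContinuousOn ω (Icc t₀ t₁)) (he : ContinuousOn e (Icc t₀ t₁)) :
    (∀ σ : ℝ → Fin 3 → ℝ, ContDiff ℝ 1 σ → σ t₀ = 0 → σ t₁ = 0 →
      ∫ t in t₀..t₁, (m t ⬝ᵥ (deriv σ t + ω t ⨯₃ σ t) - e t ⬝ᵥ γ t ⨯₃ σ t) = 0)
    ↔ ∀ t ∈ Icc t₀ t₁, m' t + ω t ⨯₃ m t = γ t ⨯₃ e t := by
  have hq : ContinuousOn (fun t => m t ⨯₃ ω t - e t ⨯₃ γ t) (Icc t₀ t₁) :=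
    (continuousOn_cross (HasDerivWithinAt.continuousOn hm) hω).sub (continuousOn_cross he hγ)
  simp only [dotProduct_add_cross_sub_dotProduct_cross, ← eq_cross_sub_cross_iff]
  exact forall_integral_dotProduct_deriv_add_eq_zero_iff ht hm hm' hq

/-- **Variational characterization of the Euler–top equations.**  For a symmetric
inertia tensor `I`, C¹ curves `γ, ω` satisfying the advection equation `γ' = γ × ω`
on `[t₀,t₁]`, the first variation of the action of the heavy top Lagrangian
`L(γ,ω) = ½ ω·Iω − γ·e` vanishes for all admissible variations `δγ = γ × σ`,
`δω = σ' + ω × σ` with `σ(t₀) = σ(t₁) = 0` if and only if the Euler–top equation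
`I ω' + ω × (I ω) = γ × e` holds on `[t₀,t₁]`. -/
theorem euler_top_variational_characterization
    (I : Matrix (Fin 3) (Fin 3) ℝ) (hI : I.IsSymm) (e : Fin 3 → ℝ)
    (t₀ t₁ : ℝ) (ht : t₀ < t₁)
    (γ ω : ℝ → Fin 3 → ℝ) (hγ : ContDiff ℝ 1 γ) (hω : ContDiff ℝ 1 ω)
    (hadv : ∀ t ∈ Icc t₀ t₁, deriv γ t = crossProduct (γ t) (ω t)) :
    (∀ σ : ℝ → Fin 3 → ℝ, ContDiff ℝ 1 σ → σ t₀ = 0 → σ t₁ = 0 →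
      ∫ t in t₀..t₁,
        ((I.mulVec (ω t)) ⬝ᵥ (deriv σ t + crossProduct (ω t) (σ t))
          - e ⬝ᵥ (crossProduct (γ t) (σ t))) = 0)
    ↔ (∀ t ∈ Icc t₀ t₁,
        I.mulVec (deriv ω t) + crossProduct (ω t) (I.mulVec (ω t))
          = crossProduct (γ t) e) := by
  have hIω (t : ℝ) : HasDerivAt (fun s => I.mulVec (ω s)) (I.mulVec (deriv ω t)) t :=
    I.mulVecLin.toContinuousLinearMap.hasFDerivAt.comp_hasDerivAt t
      (hω.differentiable one_ne_zero t).hasDerivAt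
  exact euler_top_variational_characterization_general ht (fun t _ => (hIω t).hasDerivWithinAt)
    (continuous_const.matrix_mulVec (hω.continuous_deriv le_rfl)).continuousOn
    hγ.continuous.continuousOn hω.continuous.continuousOn continuousOn_const
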